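/- arXiv:math/9503212 — 2 statements merged into one kernel-verified Lean document; each statement's English description precedes it below -/
import Mathlib

section
/- Let X_1,…,X_k be jointly symmetric q-stable random variables (0<q≤2), m<k, and q_1,…,q_k ∈ (0,2]. Then E[exp(-Σ_{i=1}^k |X_i|^{q_i})] ≥ E[exp(-Σ_{i=1}^m |X_i|^{q_i})] · E[exp(-Σ_{i=m+1}^k |X_i|^{q_i})]. -/
open MeasureTheory
open scoped RealInnerProductSpace

open Filter Topology

/-- The smallest family of real functions on `E` containing `x ↦ cos ⟪u, x⟫` that is stable under
addition, multiplication by nonnegative constants and uniformly bounded pointwise limits. -/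
inductive CosineCone {E : Type*} [NormedAddCommGroup E] [InnerProductSpace ℝ E] : (E → ℝ) → Prop
  | cos (u : E) : CosineCone fun x => Real.cos ⟪u, x⟫
  | add {f g : E → ℝ} (hf : CosineCone f) (hg : CosineCone g) : CosineCone fun x => f x + g x
  | const_mul {f : E → ℝ} (c : ℝ) (hc : 0 ≤ c) (hf : CosineCone f) : CosineCone fun x => c * f x
  | lim {F : ℕ → E → ℝ} {f : E → ℝ} (C : ℝ) (hF : ∀ n, CosineCone (F n))
      (hC : ∀ n x, |F n x| ≤ C) (hlim : ∀ x, Tendsto (fun n => F n x) atTop (𝓝 (f x))) :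
      CosineCone f

namespace CosineCone

variable {E : Type*} [NormedAddCommGroup E] [InnerProductSpace ℝ E] {f g : E → ℝ}

theorem exists_bound (hf : CosineCone f) : ∃ C, ∀ x, |f x| ≤ C := by
  induction hf with
  | cos u => exact ⟨1, fun x => Real.abs_cos_le_one _⟩
  | add _ _ hf hg =>
    obtain ⟨C, hC⟩ := hf
    obtain ⟨D, hD⟩ := hg
    exact ⟨C + D, fun x => (abs_add_le _ _).trans (add_le_add (hC x) (hD x))⟩
  | const_mul c hc _ hf =>
    obtain ⟨C, hC⟩ := hf
    exact ⟨c * C, fun x => by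
      rw [abs_mul, abs_of_nonneg hc]; exact mul_le_mul_of_nonneg_left (hC x) hc⟩
  | lim C _ hC hlim _ =>
    exact ⟨C, fun x => le_of_tendsto' (hlim x).abs fun n => hC n x⟩

theorem measurable [MeasurableSpace E] [BorelSpace E] (hf : CosineCone f) : Measurable f := by
  induction hf with
  | cos u => exact (by fun_prop : Continuous fun x : E => Real.cos ⟪u, x⟫).measurable
  | add _ _ hf hg => exact hf.add hg
  | const_mul c _ _ hf => exact hf.const_mul c
  | lim C _ _ hlim hF => exact measurable_of_tendsto_metrizable hF (tendsto_pi_nhds.2 hlim)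

theorem cos_mul (u : E) (hg : CosineCone g) : CosineCone fun x => Real.cos ⟪u, x⟫ * g x := by
  induction hg with
  | cos v =>
    convert const_mul (1 / 2) (by norm_num) (add (cos (u + v)) (cos (u - v))) using 2 with x
    rw [inner_add_left, inner_sub_left, Real.cos_add, Real.cos_sub]
    ring
  | add _ _ hf hg => convert add hf hg using 2; ring
  | const_mul c hc _ hf => convert const_mul c hc hf using 2; ring
  | lim C _ hC hlim hF =>
    refine lim C hF (fun n x => ?_) fun x => (hlim x).const_mul _
    rw [abs_mul]
    exact (mul_le_of_le_one_left (abs_nonneg _) (Real.abs_cos_le_one _)).trans (hC n x)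

theorem mul (hf : CosineCone f) (hg : CosineCone g) : CosineCone fun x => f x * g x := by
  induction hf with
  | cos u => exact cos_mul u hg
  | add _ _ hf₁ hf₂ => convert add hf₁ hf₂ using 2; ring
  | const_mul c hc _ hf => convert const_mul c hc hf using 2; ring
  | lim C _ hC hlim hF =>
    obtain ⟨D, hD⟩ := hg.exists_bound
    refine lim (C * D) hF (fun n x => ?_) fun x => (hlim x).mul_const _
    rw [abs_mul]
    exact mul_le_mul (hC n x) (hD x) (abs_nonneg _) ((abs_nonneg _).trans (hC n x))

theorem const {c : ℝ} (hc : 0 ≤ c) : CosineCone fun _ : E => c := by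
  simpa using const_mul c hc (cos (0 : E))

theorem pow (hf : CosineCone f) (n : ℕ) : CosineCone fun x => f x ^ n := by
  induction n with
  | zero => simpa using const (E := E) zero_le_one
  | succ n ih => simpa only [pow_succ] using ih.mul hf

theorem sum {ι : Type*} (s : Finset ι) {F : ι → E → ℝ} (hF : ∀ i ∈ s, CosineCone (F i)) :
    CosineCone fun x => ∑ i ∈ s, F i x := by
  classical
  induction s using Finset.induction_on with
  | empty => simpa using const (E := E) le_rfl
  | insert i s hi ih =>
    simp only [Finset.sum_insert hi]
    exact add (hF i (by simp)) (ih fun j hj => hF j (by simp [hj]))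

theorem prod {ι : Type*} (s : Finset ι) {F : ι → E → ℝ} (hF : ∀ i ∈ s, CosineCone (F i)) :
    CosineCone fun x => ∏ i ∈ s, F i x := by
  classical
  induction s using Finset.induction_on with
  | empty => simpa using const (E := E) zero_le_one
  | insert i s hi ih =>
    simp only [Finset.prod_insert hi]
    exact mul (hF i (by simp)) (ih fun j hj => hF j (by simp [hj]))

/-- The cone is stable under composition with power series having nonnegative coefficients. -/
theorem comp_hasSum {a : ℕ → ℝ} (ha : ∀ n, 0 ≤ a n) {R : ℝ} (hf : CosineCone f)
    (hR : ∀ x, |f x| ≤ R) (hs : Summable fun n => a n * R ^ n)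
    {h : E → ℝ} (hh : ∀ x, HasSum (fun n => a n * f x ^ n) (h x)) : CosineCone h := by
  refine lim (∑' n, a n * R ^ n)
    (fun N => sum (Finset.range N) fun n _ => const_mul (a n) (ha n) (hf.pow n))
    (fun N x => ?_) fun x => (hh x).tendsto_sum_nat
  have hR0 : 0 ≤ R := (abs_nonneg _).trans (hR x)
  calc |∑ n ∈ Finset.range N, a n * f x ^ n|
      ≤ ∑ n ∈ Finset.range N, |a n * f x ^ n| := Finset.abs_sum_le_sum_abs _ _
    _ ≤ ∑ n ∈ Finset.range N, a n * R ^ n := by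
      refine Finset.sum_le_sum fun n _ => ?_
      rw [abs_mul, abs_of_nonneg (ha n), abs_pow]
      exact mul_le_mul_of_nonneg_left (pow_le_pow_left₀ (abs_nonneg _) (hR x) n) (ha n)
    _ ≤ ∑' n, a n * R ^ n :=
      hs.sum_le_tsum _ fun n _ => mul_nonneg (ha n) (pow_nonneg hR0 n)

theorem exp (hf : CosineCone f) : CosineCone fun x => Real.exp (f x) := by
  obtain ⟨R, hR⟩ := hf.exists_bound
  have key (y : ℝ) : HasSum (fun n : ℕ => (n.factorial : ℝ)⁻¹ * y ^ n) (Real.exp y) := by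
    rw [Real.exp_eq_exp_ℝ]
    simpa [smul_eq_mul] using NormedSpace.exp_series_hasSum_exp' (𝕂 := ℝ) y
  exact comp_hasSum (fun n => by positivity) hf hR (key R).summable fun x => key _

end CosineCone

theorem Real.neg_one_pow_succ_mul_choose_nonpos {a : ℝ} (h0 : 0 ≤ a) (h1 : a ≤ 1) (n : ℕ) :
    (-1) ^ (n + 1) * Ring.choose a (n + 1) ≤ 0 := by
  have hsucc (m : ℕ) : ((m : ℝ) + 1) * Ring.choose a (m + 1) = (a - m) * Ring.choose a m := by
    simp only [Ring.choose_eq_smul, descPochhammer_succ_right, Polynomial.smeval_mul,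
      Nat.factorial_succ, smul_eq_mul, Polynomial.smeval_sub, Polynomial.smeval_X,
      Polynomial.smeval_natCast]
    push_cast
    field_simp
    simp
  induction n with
  | zero => simpa using h0
  | succ n ih =>
    have h := hsucc (n + 1)
    push_cast at h
    have e : ((n : ℝ) + 1 + 1) * ((-1) ^ (n + 1 + 1) * Ring.choose a (n + 1 + 1)) =
        ((n + 1 : ℝ) - a) * ((-1) ^ (n + 1) * Ring.choose a (n + 1)) := by
      rw [mul_left_comm, h]; ring
    have hn : (0 : ℝ) ≤ n := n.cast_nonneg
    have := mul_nonpos_of_nonneg_of_nonpos (by linarith : 0 ≤ (n + 1 : ℝ) - a) ih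
    rw [← e] at this
    exact nonpos_of_mul_nonpos_right this (by positivity)

theorem Real.hasSum_one_sub_rpow {a x : ℝ} (hx : |x| < 1) :
    HasSum (fun n : ℕ => (-1) ^ n * Ring.choose a n * x ^ n) ((1 - x) ^ a) := by
  have h := (Real.one_add_rpow_hasFPowerSeriesOnBall_zero (a := a)).hasSum (y := -x)
    (by rw [← ENNReal.ofReal_one, Metric.eball_ofReal]; simpa using hx)
  rw [zero_add, ← sub_eq_add_neg] at h
  refine h.congr_fun fun n => ?_
  rw [binomialSeries_apply, List.ofFn_const, List.prod_replicate, smul_eq_mul, neg_pow]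
  ring

namespace CosineCone

variable {E : Type*} [NormedAddCommGroup E] [InnerProductSpace ℝ E] {f : E → ℝ}

theorem one_sub_one_sub_rpow {a r : ℝ} (h0 : 0 ≤ a) (h1 : a ≤ 1) (hf : CosineCone f)
    (hr : r < 1) (hfr : ∀ x, |f x| ≤ r) : CosineCone fun x => 1 - (1 - f x) ^ a := by
  have hr0 : 0 ≤ r := (abs_nonneg _).trans (hfr 0)
  have key {y : ℝ} (hy : |y| < 1) :
      HasSum (fun n : ℕ => (if n = 0 then 0 else -((-1) ^ n * Ring.choose a n)) * y ^ n)
        (1 - (1 - y) ^ a) := by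
    have := (hasSum_ite_eq 0 (1 : ℝ)).sub (Real.hasSum_one_sub_rpow (a := a) hy)
    refine this.congr_fun fun n => ?_
    rcases n with _ | n
    · simp
    · simp [neg_mul]
  refine comp_hasSum (fun n => ?_) hf hfr
    (key (by rwa [abs_of_nonneg hr0])).summable fun x => key ((hfr x).trans_lt hr)
  rcases n with _ | n
  · simp
  · simpa using Real.neg_one_pow_succ_mul_choose_nonpos h0 h1 n

theorem one_sub_one_sub_cos_rpow {a : ℝ} (h0 : 0 < a) (h1 : a ≤ 1) (u : E) :
    CosineCone fun x => 1 - (1 - Real.cos ⟪u, x⟫) ^ a := by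
  have hr (n : ℕ) : 0 ≤ 1 - 1 / ((n : ℝ) + 1) ∧ 1 - 1 / ((n : ℝ) + 1) < 1 := by
    have : (0 : ℝ) < n + 1 := by positivity
    refine ⟨?_, by simpa using this⟩
    rw [sub_nonneg, div_le_one this]
    simp
  have hb (n : ℕ) (x : E) :
      |(1 - 1 / ((n : ℝ) + 1)) * Real.cos ⟪u, x⟫| ≤ 1 - 1 / ((n : ℝ) + 1) := by
    rw [abs_mul, abs_of_nonneg (hr n).1]
    exact mul_le_of_le_one_right (hr n).1 (Real.abs_cos_le_one _)
  refine lim (F := fun (n : ℕ) x => 1 - (1 - (1 - 1 / ((n : ℝ) + 1)) * Real.cos ⟪u, x⟫) ^ a)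
    (1 + 2 ^ a) (fun n => ?_) (fun n x => ?_) fun x => ?_
  · exact one_sub_one_sub_rpow h0.le h1 (const_mul _ (hr n).1 (cos u)) (hr n).2 (hb n)
  · have h := abs_le.1 (hb n x)
    have hn := hr n
    have h3 : 0 ≤ 1 - (1 - 1 / ((n : ℝ) + 1)) * Real.cos ⟪u, x⟫ := by linarith
    have h4 := Real.rpow_nonneg h3 a
    have h5 := Real.rpow_le_rpow h3 (by linarith : _ ≤ (2 : ℝ)) h0.le
    rw [abs_le]
    constructor <;> linarith
  · have h : Tendsto (fun n : ℕ => 1 - (1 - 1 / ((n : ℝ) + 1)) * Real.cos ⟪u, x⟫) atTop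
        (𝓝 (1 - (1 - 0) * Real.cos ⟪u, x⟫)) :=
      ((tendsto_one_div_add_atTop_nhds_zero_nat.const_sub 1).mul_const _).const_sub 1
    rw [sub_zero, one_mul] at h
    exact (h.rpow_const (Or.inr h0.le)).const_sub 1

theorem exp_neg_mul_one_sub_cos_rpow {a : ℝ} (h0 : 0 < a) (h1 : a ≤ 1) {c : ℝ} (hc : 0 ≤ c)
    (u : E) : CosineCone fun x => Real.exp (-(c * (1 - Real.cos ⟪u, x⟫) ^ a)) := by
  convert const_mul (Real.exp (-c)) (Real.exp_pos _).le
    (const_mul c hc (one_sub_one_sub_cos_rpow h0 h1 u)).exp using 2 with x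
  rw [← Real.exp_add]
  congr 1
  ring

end CosineCone

theorem Real.tendsto_sq_mul_one_sub_cos_div (t : ℝ) :
    Tendsto (fun n : ℕ => 2 * ((n : ℝ) + 1) ^ 2 * (1 - Real.cos (t / (n + 1)))) atTop
      (𝓝 (t ^ 2)) := by
  have h1 : HasDerivAt (fun y : ℝ => Real.sin (y * (t / 2))) (t / 2) 0 := by
    simpa using ((hasDerivAt_id (0 : ℝ)).mul_const (t / 2)).sin
  have h2 : Tendsto (fun n : ℕ => 1 / ((n : ℝ) + 1)) atTop (𝓝[≠] 0) :=
    tendsto_nhdsWithin_iff.2 ⟨tendsto_one_div_add_atTop_nhds_zero_nat,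
      Eventually.of_forall fun n => one_div_ne_zero n.cast_add_one_ne_zero⟩
  have h3 := ((h1.tendsto_slope_zero.comp h2).const_mul 2).pow 2
  convert h3 using 2 with n
  · have : Real.cos (t / (n + 1)) = 1 - 2 * Real.sin (1 / ((n : ℝ) + 1) * (t / 2)) ^ 2 := by
      rw [show t / ((n : ℝ) + 1) = 2 * (1 / ((n : ℝ) + 1) * (t / 2)) by ring, Real.cos_two_mul,
        Real.cos_sq']
      ring
    rw [this]
    simp
    ring
  · ring

theorem CosineCone.exp_neg_abs_inner_rpow {E : Type*} [NormedAddCommGroup E]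
    [InnerProductSpace ℝ E] {q : ℝ} (hq0 : 0 < q) (hq2 : q ≤ 2) (u : E) :
    CosineCone fun x => Real.exp (-|⟪u, x⟫| ^ q) := by
  have hc (n : ℕ) : 0 ≤ 2 * ((n : ℝ) + 1) ^ 2 := by positivity
  have hcos (y : ℝ) : 0 ≤ 1 - Real.cos y := sub_nonneg.2 (Real.cos_le_one _)
  refine lim 1 (fun n : ℕ => exp_neg_mul_one_sub_cos_rpow (by positivity : 0 < q / 2)
    (by linarith) (Real.rpow_nonneg (hc n) (q / 2)) ((n + 1 : ℝ)⁻¹ • u)) (fun n x => ?_)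
    fun x => ?_
  · rw [Real.abs_exp, Real.exp_le_one_iff, neg_nonpos]
    exact mul_nonneg (Real.rpow_nonneg (hc n) _) (Real.rpow_nonneg (hcos _) _)
  · have h := (Real.tendsto_sq_mul_one_sub_cos_div ⟪u, x⟫).rpow_const
      (p := q / 2) (Or.inr (by positivity))
    have e : (⟪u, x⟫ ^ 2) ^ (q / 2) = |⟪u, x⟫| ^ q := by
      rw [← sq_abs, ← Real.rpow_natCast, ← Real.rpow_mul (abs_nonneg _)]
      congr 1
      push_cast
      ring
    rw [e] at h
    refine (Real.continuous_exp.tendsto _).comp (h.neg.congr fun n => ?_)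
    rw [real_inner_smul_left, ← div_eq_inv_mul, Real.mul_rpow (hc n) (hcos _)]

/-- Functions in the cosine cone are positively correlated as soon as cosines are. -/
theorem CosineCone.integral_mul_integral_le {E Ω : Type*} [NormedAddCommGroup E]
    [InnerProductSpace ℝ E] [MeasurableSpace E] [BorelSpace E] {mΩ : MeasurableSpace Ω}
    {μ : Measure Ω} [IsFiniteMeasure μ] {Y : Ω → E} (hY : Measurable Y)
    (hcos : ∀ u v : E, (∫ ω, Real.cos ⟪u, Y ω⟫ ∂μ) * (∫ ω, Real.cos ⟪v, Y ω⟫ ∂μ) ≤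
      ∫ ω, Real.cos ⟪u, Y ω⟫ * Real.cos ⟪v, Y ω⟫ ∂μ)
    {f g : E → ℝ} (hf : CosineCone f) (hg : CosineCone g) :
    (∫ ω, f (Y ω) ∂μ) * (∫ ω, g (Y ω) ∂μ) ≤ ∫ ω, f (Y ω) * g (Y ω) ∂μ := by
  have hint {h : E → ℝ} (hh : CosineCone h) : Integrable (fun ω => h (Y ω)) μ := by
    obtain ⟨C, hC⟩ := hh.exists_bound
    exact .of_bound (hh.measurable.comp hY).aestronglyMeasurable C (.of_forall fun ω => hC _)
  have hlim {F : ℕ → E → ℝ} {h : E → ℝ} {C : ℝ} (hF : ∀ n, CosineCone (F n))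
      (hC : ∀ n x, |F n x| ≤ C) (hl : ∀ x, Tendsto (fun n => F n x) atTop (𝓝 (h x))) :
      Tendsto (fun n => ∫ ω, F n (Y ω) ∂μ) atTop (𝓝 (∫ ω, h (Y ω) ∂μ)) :=
    tendsto_integral_of_dominated_convergence (fun _ => C) (fun n => (hint (hF n)).1)
      (integrable_const _) (fun n => .of_forall fun ω => hC n _) (.of_forall fun ω => hl _)
  have step {h : E → ℝ} (hh : CosineCone h)
      (H : ∀ u, (∫ ω, Real.cos ⟪u, Y ω⟫ ∂μ) * (∫ ω, h (Y ω) ∂μ) ≤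
        ∫ ω, Real.cos ⟪u, Y ω⟫ * h (Y ω) ∂μ) {k : E → ℝ} (hk : CosineCone k) :
      (∫ ω, k (Y ω) ∂μ) * (∫ ω, h (Y ω) ∂μ) ≤ ∫ ω, k (Y ω) * h (Y ω) ∂μ := by
    induction hk with
    | cos u => exact H u
    | add h₁ h₂ ih₁ ih₂ =>
      simp only [add_mul]
      rw [integral_add (hint h₁) (hint h₂), integral_add (hint (h₁.mul hh)) (hint (h₂.mul hh)),
        add_mul]
      exact add_le_add ih₁ ih₂
    | const_mul c hc h₁ ih =>
      simp only [mul_assoc]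
      rw [integral_const_mul, integral_const_mul, mul_assoc]
      exact mul_le_mul_of_nonneg_left ih hc
    | lim C hF hC hl ih =>
      obtain ⟨D, hD⟩ := hh.exists_bound
      refine le_of_tendsto_of_tendsto' ((hlim hF hC hl).mul_const _)
        (hlim (C := C * D) (fun n => (hF n).mul hh) (fun n x => ?_)
          fun x => (hl x).mul_const _) ih
      rw [abs_mul]
      exact mul_le_mul (hC n x) (hD x) (abs_nonneg _) ((abs_nonneg _).trans (hC n x))
  refine step hg (fun u => ?_) hf
  simpa only [mul_comm] using step (cos u) (fun v => by simpa only [mul_comm] using hcos u v) hg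

theorem Real.abs_add_rpow_add_abs_sub_rpow_le {q : ℝ} (hq0 : 0 < q) (hq2 : q ≤ 2) (a b : ℝ) :
    |a + b| ^ q + |a - b| ^ q ≤ 2 * (|a| ^ q + |b| ^ q) := by
  have e (t : ℝ) : |t| ^ q = (t ^ 2) ^ (q / 2) := by
    rw [← sq_abs, ← Real.rpow_natCast, ← Real.rpow_mul (abs_nonneg _)]
    congr 1
    push_cast
    ring
  simp only [e]
  have h1 := (Real.concaveOn_rpow (by positivity : 0 ≤ q / 2) (by linarith)).2
    (Set.mem_Ici.2 (sq_nonneg (a + b))) (Set.mem_Ici.2 (sq_nonneg (a - b)))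
    (by norm_num : (0 : ℝ) ≤ 1 / 2) (by norm_num : (0 : ℝ) ≤ 1 / 2) (by norm_num)
  have h2 := Real.rpow_add_le_add_rpow (sq_nonneg a) (sq_nonneg b)
    (by positivity : 0 ≤ q / 2) (by linarith)
  simp only [smul_eq_mul] at h1
  rw [show 1 / 2 * (a + b) ^ 2 + 1 / 2 * (a - b) ^ 2 = a ^ 2 + b ^ 2 by ring] at h1
  linarith

theorem MeasureTheory.Lp.norm_add_rpow_add_norm_sub_rpow_le {α : Type*} {mα : MeasurableSpace α}
    {μ : Measure α} {q : ℝ} (hq0 : 0 < q) (hq2 : q ≤ 2) (f g : Lp ℝ (ENNReal.ofReal q) μ) :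
    ‖f + g‖ ^ q + ‖f - g‖ ^ q ≤ 2 * (‖f‖ ^ q + ‖g‖ ^ q) := by
  have hp0 : ENNReal.ofReal q ≠ 0 := by simpa using hq0
  have hpq : (ENNReal.ofReal q).toReal = q := ENNReal.toReal_ofReal hq0.le
  have hint (h : Lp ℝ (ENNReal.ofReal q) μ) : Integrable (fun x => |h x| ^ q) μ := by
    simpa only [hpq, Real.norm_eq_abs] using (Lp.memLp h).integrable_norm_rpow hp0 ENNReal.ofReal_ne_top
  have hnorm (h : Lp ℝ (ENNReal.ofReal q) μ) : ‖h‖ ^ q = ∫ x, |h x| ^ q ∂μ := by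
    rw [Lp.norm_def, (Lp.memLp h).eLpNorm_eq_integral_rpow_norm hp0 ENNReal.ofReal_ne_top, hpq]
    have h0 : 0 ≤ ∫ x, ‖h x‖ ^ q ∂μ := integral_nonneg fun x => by positivity
    rw [ENNReal.toReal_ofReal (Real.rpow_nonneg h0 _), Real.rpow_inv_rpow h0 hq0.ne']
    rfl
  rw [hnorm, hnorm, hnorm, hnorm, ← integral_add (hint _) (hint _),
    ← integral_add (hint _) (hint _), ← integral_const_mul]
  refine integral_mono_ae ((hint _).add (hint _)) (((hint _).add (hint _)).const_mul 2) ?_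
  filter_upwards [Lp.coeFn_add f g, Lp.coeFn_sub f g] with x h1 h2
  rw [h1, h2]
  exact Real.abs_add_rpow_add_abs_sub_rpow_le hq0 hq2 _ _

/-- The law with characteristic function `exp (-N)`, where `N` satisfies the parallelogram
inequality, makes cosines positively correlated. -/
theorem integral_cos_mul_integral_cos_le {E Ω : Type*} [NormedAddCommGroup E]
    [InnerProductSpace ℝ E] [MeasurableSpace E] [BorelSpace E] {mΩ : MeasurableSpace Ω}
    {μ : Measure Ω} [IsFiniteMeasure μ] {Y : Ω → E} (hY : Measurable Y) {N : E → ℝ}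
    (hN : ∀ u v, N (u + v) + N (u - v) ≤ 2 * (N u + N v))
    (hchar : ∀ u, ∫ ω, Complex.exp ((⟪u, Y ω⟫ : ℝ) * Complex.I) ∂μ = Complex.exp (-(N u : ℝ)))
    (u v : E) :
    (∫ ω, Real.cos ⟪u, Y ω⟫ ∂μ) * (∫ ω, Real.cos ⟪v, Y ω⟫ ∂μ) ≤
      ∫ ω, Real.cos ⟪u, Y ω⟫ * Real.cos ⟪v, Y ω⟫ ∂μ := by
  have hmeas (w : E) : Measurable fun ω => ⟪w, Y ω⟫ :=
    ((by fun_prop : Continuous fun x : E => ⟪w, x⟫).measurable).comp hY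
  have hint (w : E) : Integrable (fun ω => Real.cos ⟪w, Y ω⟫) μ :=
    .of_bound (hmeas w).cos.aestronglyMeasurable 1 (.of_forall fun ω => Real.abs_cos_le_one _)
  have hcos (w : E) : ∫ ω, Real.cos ⟪w, Y ω⟫ ∂μ = Real.exp (-N w) := by
    have hI : Integrable (fun ω => Complex.exp ((⟪w, Y ω⟫ : ℝ) * Complex.I)) μ :=
      .of_bound ((hmeas w).complex_ofReal.mul_const _).cexp.aestronglyMeasurable 1
        (.of_forall fun ω => (Complex.norm_exp_ofReal_mul_I _).le)
    have h1 := integral_re hI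
    simp only [RCLike.re_to_complex, Complex.exp_ofReal_mul_I_re] at h1
    rw [h1, hchar]
    norm_cast
  have hmul (ω : Ω) : Real.cos ⟪u, Y ω⟫ * Real.cos ⟪v, Y ω⟫ =
      1 / 2 * (Real.cos ⟪u + v, Y ω⟫ + Real.cos ⟪u - v, Y ω⟫) := by
    rw [inner_add_left, inner_sub_left, Real.cos_add, Real.cos_sub]
    ring
  simp only [hmul]
  rw [integral_const_mul, integral_add (hint _) (hint _), hcos, hcos, hcos, hcos, ← Real.exp_add]
  have h1 := convexOn_exp.2 (Set.mem_univ (-N (u + v))) (Set.mem_univ (-N (u - v)))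
    (by norm_num : (0 : ℝ) ≤ 1 / 2) (by norm_num : (0 : ℝ) ≤ 1 / 2) (by norm_num)
  simp only [smul_eq_mul] at h1
  rw [mul_add]
  exact (Real.exp_le_exp.2 (by linarith [hN u v])).trans h1

/-- Example (ii): correlation inequality for the functions `exp(-∑|X_i|^{q_i})` of
jointly symmetric `q`-stable random variables. -/
theorem stable_correlation_exp
    (q : ℝ) (hq0 : 0 < q) (hq2 : q ≤ 2)
    (n k m : ℕ) (hm : m < k)
    (Ω : Type*) [MeasureSpace Ω] [IsProbabilityMeasure (volume : Measure Ω)]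
    (Y : Ω → EuclideanSpace ℝ (Fin n)) (hY : Measurable Y)
    (s : Fin n → Lp ℝ (ENNReal.ofReal q) (volume.restrict (Set.Icc (0:ℝ) 1)))
    (hchar : ∀ θ : EuclideanSpace ℝ (Fin n),
      ∫ ω, Complex.exp ((⟪θ, Y ω⟫ : ℝ) * Complex.I) =
        Complex.exp (-(‖∑ i, θ i • s i‖ ^ q : ℝ)))
    (ξ : Fin k → EuclideanSpace ℝ (Fin n))
    (X : Fin k → Ω → ℝ) (hX : ∀ i ω, X i ω = ⟪Y ω, ξ i⟫)
    (q' : Fin k → ℝ) (hq' : ∀ i, 0 < q' i ∧ q' i ≤ 2) :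
    ∫ ω, Real.exp (-∑ i : Fin k, |X i ω| ^ q' i) ≥
      (∫ ω, Real.exp (-∑ i ∈ Finset.univ.filter (fun i : Fin k => (i : ℕ) < m),
          |X i ω| ^ q' i)) *
      (∫ ω, Real.exp (-∑ i ∈ Finset.univ.filter (fun i : Fin k => m ≤ (i : ℕ)),
          |X i ω| ^ q' i)) := by
  let N : EuclideanSpace ℝ (Fin n) → ℝ := fun θ => ‖∑ i, θ i • s i‖ ^ q
  have hN (u v) : N (u + v) + N (u - v) ≤ 2 * (N u + N v) := by
    have := Lp.norm_add_rpow_add_norm_sub_rpow_le hq0 hq2 (∑ i, u i • s i) (∑ i, v i • s i)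
    simpa only [N, PiLp.add_apply, PiLp.sub_apply, add_smul, sub_smul, Finset.sum_add_distrib,
      Finset.sum_sub_distrib] using this
  have hcone (A : Finset (Fin k)) :
      CosineCone fun x : EuclideanSpace ℝ (Fin n) => Real.exp (-∑ i ∈ A, |⟪ξ i, x⟫| ^ q' i) := by
    simp only [← Finset.sum_neg_distrib, Real.exp_sum]
    exact .prod A fun i _ => .exp_neg_abs_inner_rpow (hq' i).1 (hq' i).2 (ξ i)
  have main := CosineCone.integral_mul_integral_le hY
    (integral_cos_mul_integral_cos_le hY hN fun u => by simpa [N] using hchar u)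
    (hcone (Finset.univ.filter fun i => (i : ℕ) < m))
    (hcone (Finset.univ.filter fun i => m ≤ (i : ℕ)))
  have hX' (i ω) : X i ω = ⟪ξ i, Y ω⟫ := by rw [hX, real_inner_comm]
  simp only [hX', ge_iff_le]
  refine main.trans_eq (integral_congr_ae (.of_forall fun ω => ?_))
  simp only [← Real.exp_add, ← neg_add, ← not_lt]
  rw [Finset.sum_filter_add_sum_filter_not]
end

section
/- Let F ⊂ ℝ^k be a symmetric convex set with compact closure and nonempty interior, and define L_{i,m} = ∫_F (x_i x_m - δ_{i,m}) exp(-‖x‖²/2) dx. Then the matrix L is negative definite: for every nonzero α ∈ ℝ^k, Σ_{i,m} L_{i,m} α_i α_m < 0. -/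
open MeasureTheory

open scoped Pointwise in
/-- One-dimensional Brunn–Minkowski inequality for compact sets. -/
lemma volume_add_le_of_isCompact {a b : ℝ} (ha : 0 < a) (hb : 0 < b) {K L S : Set ℝ}
    (hK : IsCompact K) (hL : IsCompact L) (hK₀ : K.Nonempty) (hL₀ : L.Nonempty)
    (hS : ∀ x ∈ K, ∀ y ∈ L, a * x + b * y ∈ S) :
    ENNReal.ofReal a * volume K + ENNReal.ofReal b * volume L ≤ volume S := by
  obtain ⟨k, hkK, hk⟩ := hK.exists_isGreatest hK₀
  obtain ⟨l, hlL, hl⟩ := hL.exists_isLeast hL₀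
  have hdisj : AEDisjoint volume ((b * l) +ᵥ a • K) ((a * k) +ᵥ b • L) := by
    refine measure_mono_null (t := {a * k + b * l}) ?_ (by simp)
    rintro z ⟨⟨_, ⟨x, hx, rfl⟩, rfl⟩, ⟨_, ⟨y, hy, rfl⟩, hz⟩⟩
    have h₁ := mul_le_mul_of_nonneg_left (hk hx) ha.le
    have h₂ := mul_le_mul_of_nonneg_left (hl hy) hb.le
    simp only [smul_eq_mul, vadd_eq_add] at hz
    simp only [smul_eq_mul, vadd_eq_add, Set.mem_singleton_iff]
    linarith
  have hmeas : NullMeasurableSet ((a * k) +ᵥ b • L) volume :=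
    ((hL.smul b).vadd (a * k)).measurableSet.nullMeasurableSet
  calc ENNReal.ofReal a * volume K + ENNReal.ofReal b * volume L
      = volume ((b * l) +ᵥ a • K) + volume ((a * k) +ᵥ b • L) := by
        simp [measure_vadd, Measure.addHaar_smul, abs_of_pos, ha, hb]
    _ = volume (((b * l) +ᵥ a • K) ∪ ((a * k) +ᵥ b • L)) := (measure_union₀ hmeas hdisj).symm
    _ ≤ volume S := by
        refine measure_mono (Set.union_subset ?_ ?_)
        · rintro _ ⟨_, ⟨x, hx, rfl⟩, rfl⟩
          simpa [add_comm] using hS x hx l hlL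
        · rintro _ ⟨_, ⟨y, hy, rfl⟩, rfl⟩
          simpa using hS k hkK y hy

/-- One-dimensional Brunn–Minkowski inequality. -/
lemma volume_add_le {a b : ℝ} (ha : 0 < a) (hb : 0 < b) {A B S : Set ℝ}
    (hA : MeasurableSet A) (hB : MeasurableSet B) (hA₀ : A.Nonempty) (hB₀ : B.Nonempty)
    (hS : ∀ x ∈ A, ∀ y ∈ B, a * x + b * y ∈ S) :
    ENNReal.ofReal a * volume A + ENNReal.ofReal b * volume B ≤ volume S := by
  obtain ⟨x₀, hx₀⟩ := hA₀
  obtain ⟨y₀, hy₀⟩ := hB₀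
  rw [hA.measure_eq_iSup_isCompact, hB.measure_eq_iSup_isCompact]
  simp only [ENNReal.mul_iSup, iSup_and']
  refine ENNReal.biSup_add_biSup_le' ⟨∅, by simp⟩ ⟨∅, by simp⟩ ?_
  rintro K ⟨hKA, hK⟩ L ⟨hLB, hL⟩
  refine le_trans (by gcongr <;> exact Set.subset_insert _ _)
    (volume_add_le_of_isCompact ha hb (hK.insert x₀) (hL.insert y₀) (Set.insert_nonempty _ _)
      (Set.insert_nonempty _ _) fun x hx y hy => hS x ?_ y ?_)
  · exact Set.insert_subset hx₀ hKA hx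
  · exact Set.insert_subset hy₀ hLB hy

/-- Additive form of the Prékopa–Leindler inequality on the line, for functions with supremum `1`. -/
lemma lintegral_ofReal_add_le {a b : ℝ} (ha : 0 < a) (hb : 0 < b) {f g h : ℝ → ℝ}
    (hf : Measurable f) (hg : Measurable g) (hh : Measurable h)
    (hf₀ : 0 ≤ f) (hg₀ : 0 ≤ g) (hh₀ : 0 ≤ h) (hf₁ : f ≤ 1) (hg₁ : g ≤ 1)
    (hfs : ∀ t < 1, ∃ x, t < f x) (hgs : ∀ t < 1, ∃ x, t < g x)
    (hfgh : ∀ t > 0, ∀ x y, t < f x → t < g y → t < h (a * x + b * y)) :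
    ENNReal.ofReal a * (∫⁻ x, ENNReal.ofReal (f x)) + ENNReal.ofReal b * ∫⁻ x, ENNReal.ofReal (g x) ≤
      ∫⁻ x, ENNReal.ofReal (h x) := by
  have hanti (u : ℝ → ℝ) : Antitone fun t => volume {x | t < u x} :=
    fun s t hst => measure_mono fun x (hx : t < u x) => hst.trans_lt hx
  rw [lintegral_eq_lintegral_meas_lt _ (.of_forall hf₀) hf.aemeasurable,
    lintegral_eq_lintegral_meas_lt _ (.of_forall hg₀) hg.aemeasurable,
    lintegral_eq_lintegral_meas_lt _ (.of_forall hh₀) hh.aemeasurable,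
    ← lintegral_const_mul _ (hanti f).measurable, ← lintegral_const_mul _ (hanti g).measurable,
    ← lintegral_add_left ((hanti f).measurable.const_mul _)]
  refine setLIntegral_mono' measurableSet_Ioi fun t (ht : 0 < t) => ?_
  obtain ht₁ | ht₁ := lt_or_ge t 1
  · exact volume_add_le ha hb (measurableSet_lt measurable_const hf)
      (measurableSet_lt measurable_const hg) (hfs t ht₁) (hgs t ht₁) fun x hx y hy =>
        hfgh t ht x y hx hy
  · have hempty {u : ℝ → ℝ} (hu : u ≤ 1) : {x | t < u x} = ∅ :=
      Set.eq_empty_of_forall_notMem fun x hx => (hx.trans_le (hu x)).not_ge ht₁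
    simp [hempty hf₁, hempty hg₁]

/-- Weighted AM-GM inequality for two extended nonnegative reals. -/
lemma ENNReal.geom_mean_le_arith_mean2_weighted {a b : ℝ} (ha : 0 < a) (hb : 0 < b)
    (hab : a + b = 1) (p q : ENNReal) :
    p ^ a * q ^ b ≤ ENNReal.ofReal a * p + ENNReal.ofReal b * q := by
  induction p with
  | top => simp [ENNReal.mul_top, ha]
  | coe p =>
    induction q with
    | top => simp [ENNReal.mul_top, hb]
    | coe q =>
      have := NNReal.geom_mean_le_arith_mean2_weighted a.toNNReal b.toNNReal p q
        (by rw [← Real.toNNReal_add ha.le hb.le, hab, Real.toNNReal_one])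
      rw [Real.coe_toNNReal _ ha.le, Real.coe_toNNReal _ hb.le] at this
      rw [← ENNReal.coe_rpow_of_nonneg _ ha.le, ← ENNReal.coe_rpow_of_nonneg _ hb.le]
      rw [ENNReal.ofReal, ENNReal.ofReal]
      exact_mod_cast this

lemma prekopa_leindler_real_of_bounded {a b : ℝ} (ha : 0 < a) (hb : 0 < b) (hab : a + b = 1)
    {f g h : ℝ → ENNReal} (hf : Measurable f) (hg : Measurable g) (hh : Measurable h)
    (hf' : ⨆ x, f x ≠ ⊤) (hg' : ⨆ x, g x ≠ ⊤)
    (hfgh : ∀ x y, f x ^ a * g y ^ b ≤ h (a * x + b * y)) :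
    (∫⁻ x, f x) ^ a * (∫⁻ x, g x) ^ b ≤ ∫⁻ x, h x := by
  obtain ⟨A, hA⟩ : ∃ A, A = ⨆ x, f x := ⟨_, rfl⟩
  obtain ⟨B, hB⟩ : ∃ B, B = ⨆ x, g x := ⟨_, rfl⟩
  rw [← hA] at hf'
  rw [← hB] at hg'
  obtain hA₀ | hA₀ := eq_or_ne A 0
  · have : f = 0 := funext fun x => by simpa using (le_iSup f x).trans_eq (hA.symm.trans hA₀)
    simp [this, ha]
  obtain hB₀ | hB₀ := eq_or_ne B 0
  · have : g = 0 := funext fun x => by simpa using (le_iSup g x).trans_eq (hB.symm.trans hB₀)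
    simp [this, hb]
  have hsup {u : ℝ → ENNReal} {U : ENNReal} (hu : Measurable u) (hU : U = ⨆ x, u x)
      (hU₀ : U ≠ 0) (hU' : U ≠ ⊤) :
      (∀ x, u x / U ≤ 1) ∧ (∀ x, ENNReal.ofReal (u x / U).toReal = u x / U) ∧
      (∀ t < 1, ∃ x, t < (u x / U).toReal) ∧
      (∀ t > 0, ∀ x, t < (u x / U).toReal → ENNReal.ofReal t * U < u x) ∧
      ∫⁻ x, u x = U * ∫⁻ x, u x / U := by
    have h₁ (x) : u x / U ≤ 1 := ENNReal.div_le_of_le_mul (by simpa [hU] using le_iSup u x)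
    have h₂ (x) : u x / U ≠ ⊤ := ((h₁ x).trans_lt ENNReal.one_lt_top).ne
    refine ⟨h₁, fun x => ENNReal.ofReal_toReal (h₂ x), fun t ht => ?_, fun t ht x hx => ?_, ?_⟩
    · obtain ht₀ | ht₀ := lt_or_ge t 0
      · exact ⟨0, ht₀.trans_le ENNReal.toReal_nonneg⟩
      · have : ENNReal.ofReal t * U < ⨆ x, u x := by
          rw [← hU]
          simpa using ENNReal.mul_lt_mul_left hU₀ hU' (ENNReal.ofReal_lt_one.2 ht)
        obtain ⟨x, hx⟩ := lt_iSup_iff.1 this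
        refine ⟨x, ?_⟩
        rwa [← ENNReal.ofReal_lt_iff_lt_toReal ht₀ (h₂ x),
          ENNReal.lt_div_iff_mul_lt (.inl hU₀) (.inl hU')]
    · rwa [← ENNReal.ofReal_lt_iff_lt_toReal ht.le (h₂ x),
        ENNReal.lt_div_iff_mul_lt (.inl hU₀) (.inl hU')] at hx
    · rw [← lintegral_const_mul _ (by fun_prop)]
      simp [ENNReal.mul_div_cancel hU₀ hU']
  obtain ⟨hf₁, hf₂, hf₃, hf₄, hf₅⟩ := hsup hf hA hA₀ hf'
  obtain ⟨hg₁, hg₂, hg₃, hg₄, hg₅⟩ := hsup hg hB hB₀ hg'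
  set C := A ^ a * B ^ b with hC
  have hC₀ : C ≠ 0 := by simp [hC, hA₀, hB₀, hf', hg']
  have hC' : C ≠ ⊤ := ENNReal.mul_ne_top (by simp [hf', hA₀]) (by simp [hg', hB₀])
  have hhm (x) : ENNReal.ofReal (min (h x / C) 1).toReal = min (h x / C) 1 :=
    ENNReal.ofReal_toReal (by simp)
  have key := lintegral_ofReal_add_le ha hb (f := fun x => (f x / A).toReal)
    (g := fun x => (g x / B).toReal) (h := fun x => (min (h x / C) 1).toReal)
    (by fun_prop) (by fun_prop) (by fun_prop) (fun _ => ENNReal.toReal_nonneg)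
    (fun _ => ENNReal.toReal_nonneg) (fun _ => ENNReal.toReal_nonneg)
    (fun x => ENNReal.toReal_le_of_le_ofReal zero_le_one (by simpa using hf₁ x))
    (fun x => ENNReal.toReal_le_of_le_ofReal zero_le_one (by simpa using hg₁ x)) hf₃ hg₃ ?_
  · simp only [hf₂, hg₂, hhm] at key
    calc (∫⁻ x, f x) ^ a * (∫⁻ x, g x) ^ b
        = C * ((∫⁻ x, f x / A) ^ a * (∫⁻ x, g x / B) ^ b) := by
          rw [hf₅, hg₅, ENNReal.mul_rpow_of_nonneg _ _ ha.le, ENNReal.mul_rpow_of_nonneg _ _ hb.le]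
          ring
      _ ≤ C * ∫⁻ x, h x / C := by
          gcongr
          exact (ENNReal.geom_mean_le_arith_mean2_weighted ha hb hab _ _).trans
            (key.trans (lintegral_mono fun x => min_le_left _ _))
      _ = ∫⁻ x, h x := by
          rw [← lintegral_const_mul _ (by fun_prop)]
          simp [ENNReal.mul_div_cancel hC₀ hC']
  · intro t ht x y hx hy
    have ht₁ : t < 1 := hx.trans_le
      (ENNReal.toReal_le_of_le_ofReal zero_le_one (by simpa using hf₁ x))
    rw [← ENNReal.ofReal_lt_iff_lt_toReal ht.le (by simp), lt_min_iff]
    refine ⟨?_, by simpa using ht₁⟩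
    rw [ENNReal.lt_div_iff_mul_lt (.inl hC₀) (.inl hC')]
    refine lt_of_lt_of_le ?_ (hfgh x y)
    calc ENNReal.ofReal t * C = (ENNReal.ofReal t * A) ^ a * (ENNReal.ofReal t * B) ^ b := by
          have : ENNReal.ofReal t = ENNReal.ofReal t ^ a * ENNReal.ofReal t ^ b := by
            rw [← ENNReal.rpow_add_of_nonneg _ _ ha.le hb.le, hab, ENNReal.rpow_one]
          rw [ENNReal.mul_rpow_of_nonneg _ _ ha.le, ENNReal.mul_rpow_of_nonneg _ _ hb.le]
          nth_rewrite 1 [this]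
          rw [hC]
          ring
      _ < f x ^ a * g y ^ b :=
          ENNReal.mul_lt_mul (ENNReal.rpow_lt_rpow (hf₄ t ht x hx) ha)
            (ENNReal.rpow_lt_rpow (hg₄ t ht y hy) hb)

/-- **Prékopa–Leindler inequality** on the line. -/
lemma prekopa_leindler_real {a b : ℝ} (ha : 0 < a) (hb : 0 < b) (hab : a + b = 1)
    {f g h : ℝ → ENNReal} (hf : Measurable f) (hg : Measurable g) (hh : Measurable h)
    (hfgh : ∀ x y, f x ^ a * g y ^ b ≤ h (a * x + b * y)) :
    (∫⁻ x, f x) ^ a * (∫⁻ x, g x) ^ b ≤ ∫⁻ x, h x := by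
  have htrunc (u : ℝ → ENNReal) (hu : Measurable u) :
      Filter.Tendsto (fun n : ℕ => ∫⁻ x, min (u x) n) Filter.atTop (nhds (∫⁻ x, u x)) := by
    have hmono : Monotone fun (n : ℕ) x => min (u x) n :=
      fun m n hmn x => min_le_min_left _ (by exact_mod_cast hmn)
    have : ∀ x, u x = ⨆ n : ℕ, min (u x) n := fun x => by
      simpa [ENNReal.iSup_natCast] using inf_iSup_eq (u x) fun n : ℕ => (n : ENNReal)
    rw [lintegral_congr this, lintegral_iSup (fun n => by fun_prop) hmono]
    exact tendsto_atTop_iSup fun m n hmn => lintegral_mono (hmono hmn)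
  obtain hF | hF := eq_or_ne (∫⁻ x, f x) 0
  · simp [hF, ha]
  obtain hG | hG := eq_or_ne (∫⁻ x, g x) 0
  · simp [hG, hb]
  refine le_of_tendsto (ENNReal.Tendsto.mul ((htrunc f hf).ennrpow_const a)
    (.inl (by simp [hF, ha.not_gt])) ((htrunc g hg).ennrpow_const b)
    (.inl (by simp [hG, hb.not_gt]))) (.of_forall fun n => ?_)
  refine prekopa_leindler_real_of_bounded ha hb hab (by fun_prop) (by fun_prop) hh ?_ ?_ ?_
  · exact ((iSup_le fun x => min_le_right _ _).trans_lt (ENNReal.natCast_lt_top n)).ne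
  · exact ((iSup_le fun x => min_le_right _ _).trans_lt (ENNReal.natCast_lt_top n)).ne
  · exact fun x y => le_trans (by gcongr <;> exact min_le_left _ _) (hfgh x y)

lemma measurePreserving_consEquivL (n : ℕ) :
    MeasurePreserving (Fin.consEquivL ℝ fun _ : Fin (n + 1) => ℝ) volume volume := by
  have h := (volume_preserving_piFinSuccAbove (fun _ : Fin (n + 1) => ℝ) 0).symm _
  have : ⇑(Fin.consEquivL ℝ fun _ : Fin (n + 1) => ℝ) =
      (MeasurableEquiv.piFinSuccAbove (fun _ : Fin (n + 1) => ℝ) 0).symm := by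
    ext p : 1
    simp only [MeasurableEquiv.piFinSuccAbove_symm_apply, Fin.insertNthEquiv_zero]
    rfl
  rwa [this]

/-- **Prékopa–Leindler inequality**. -/
theorem prekopa_leindler {a b : ℝ} (ha : 0 < a) (hb : 0 < b) (hab : a + b = 1) (n : ℕ)
    {f g h : (Fin n → ℝ) → ENNReal} (hf : Measurable f) (hg : Measurable g) (hh : Measurable h)
    (hfgh : ∀ x y, f x ^ a * g y ^ b ≤ h (a • x + b • y)) :
    (∫⁻ x, f x) ^ a * (∫⁻ x, g x) ^ b ≤ ∫⁻ x, h x := by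
  induction n with
  | zero =>
    have hvol : volume (Set.univ : Set (Fin 0 → ℝ)) = 1 := by simp [volume_pi]
    simp only [lintegral_unique, hvol, mul_one]
    exact (hfgh _ _).trans_eq (congrArg h (Subsingleton.elim _ _))
  | succ n ih =>
    let c := Fin.consEquivL ℝ fun _ : Fin (n + 1) => ℝ
    have hc : Measurable c := c.continuous.measurable
    have hsplit {u : (Fin (n + 1) → ℝ) → ENNReal} (hu : Measurable u) :
        ∫⁻ x, u x = ∫⁻ t, ∫⁻ y : Fin n → ℝ, u (c (t, y)) := by
      rw [← (measurePreserving_consEquivL n).lintegral_comp hu, Measure.volume_eq_prod,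
        lintegral_prod (fun p => u (c p)) (hu.comp hc).aemeasurable]
    have hmarg {u : (Fin (n + 1) → ℝ) → ENNReal} (hu : Measurable u) :
        Measurable fun t => ∫⁻ y : Fin n → ℝ, u (c (t, y)) :=
      (hu.comp hc).lintegral_prod_right'
    have hsec {u : (Fin (n + 1) → ℝ) → ENNReal} (hu : Measurable u) (t : ℝ) :
        Measurable fun y : Fin n → ℝ => u (c (t, y)) :=
      (hu.comp hc).comp measurable_prodMk_left
    rw [hsplit hf, hsplit hg, hsplit hh]
    refine prekopa_leindler_real ha hb hab (hmarg hf) (hmarg hg) (hmarg hh) fun s t =>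
      ih (hsec hf s) (hsec hg t) (hsec hh _) fun x y => (hfgh _ _).trans_eq ?_
    rw [← map_smul, ← map_smul, ← map_add]
    simp

/-- The Gaussian weight of the slices of a symmetric convex set decreases away from the centre. -/
lemma setLIntegral_slice_le {n : ℕ} {K : Set (ℝ × (Fin n → ℝ))} (hK : Convex ℝ K)
    (hKm : MeasurableSet K) (hneg : ∀ p ∈ K, -p ∈ K) {s t : ℝ} (hst : |s| ≤ |t|) :
    ∫⁻ y in Prod.mk t ⁻¹' K, ENNReal.ofReal (Real.exp (-(∑ i, y i ^ 2) / 2)) ≤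
      ∫⁻ y in Prod.mk s ⁻¹' K, ENNReal.ofReal (Real.exp (-(∑ i, y i ^ 2) / 2)) := by
  let ψ : (Fin n → ℝ) → ENNReal := fun y => ENNReal.ofReal (Real.exp (-(∑ i, y i ^ 2) / 2))
  have hψ : Measurable ψ := by fun_prop
  have hm (u : ℝ) : MeasurableSet (Prod.mk u ⁻¹' K : Set (Fin n → ℝ)) :=
    measurable_prodMk_left hKm
  have hsymm (u : ℝ) : ∫⁻ y in Prod.mk (-u) ⁻¹' K, ψ y = ∫⁻ y in Prod.mk u ⁻¹' K, ψ y := by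
    rw [← lintegral_indicator (hm _), ← lintegral_indicator (hm _), ← lintegral_neg_eq_self]
    refine lintegral_congr fun y => ?_
    have : (-u, -y) ∈ K ↔ (u, y) ∈ K :=
      ⟨fun h => by simpa using hneg _ h, fun h => by simpa using hneg _ h⟩
    classical simp only [Set.indicator_apply, Set.mem_preimage, this, ψ, Pi.neg_apply, neg_sq]
  change ∫⁻ y in Prod.mk t ⁻¹' K, ψ y ≤ ∫⁻ y in Prod.mk s ⁻¹' K, ψ y
  obtain hst | hst := hst.eq_or_lt
  · obtain rfl | rfl := abs_eq_abs.1 hst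
    · rfl
    · exact (hsymm t).ge
  have ht : t ≠ 0 := by
    rintro rfl
    simp [(abs_nonneg s).not_gt] at hst
  have hr : |s / t| < 1 := by rwa [abs_div, div_lt_one (abs_pos.2 ht)]
  obtain ⟨hr₁, hr₂⟩ := abs_lt.1 hr
  have ha : 0 < (1 + s / t) / 2 := by linarith
  have hb : 0 < (1 - s / t) / 2 := by linarith
  have hab : (1 + s / t) / 2 + (1 - s / t) / 2 = 1 := by ring
  have hs : (1 + s / t) / 2 * t + (1 - s / t) / 2 * -t = s := by field_simp; ring
  generalize (1 + s / t) / 2 = a at *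
  generalize (1 - s / t) / 2 = b at *
  have key := prekopa_leindler ha hb hab n (hψ.indicator (hm t)) (hψ.indicator (hm (-t)))
    (hψ.indicator (hm s)) ?_
  · rw [lintegral_indicator (hm _), lintegral_indicator (hm _), lintegral_indicator (hm _),
      hsymm, ← ENNReal.rpow_add_of_nonneg _ _ ha.le hb.le, hab, ENNReal.rpow_one] at key
    exact key
  intro x y
  by_cases hx : (t, x) ∈ K
  · by_cases hy : (-t, y) ∈ K
    · have hz : (s, a • x + b • y) ∈ K := by
        have := hK hx hy ha.le hb.le hab
        rwa [Prod.smul_mk, Prod.smul_mk, Prod.mk_add_mk, smul_eq_mul, smul_eq_mul, hs] at this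
      rw [Set.indicator_of_mem (by exact hx), Set.indicator_of_mem (by exact hy),
        Set.indicator_of_mem (by exact hz)]
      simp only [ψ]
      rw [ENNReal.ofReal_rpow_of_pos (Real.exp_pos _), ENNReal.ofReal_rpow_of_pos (Real.exp_pos _),
        ← ENNReal.ofReal_mul (by positivity), ← Real.exp_mul, ← Real.exp_mul, ← Real.exp_add]
      refine ENNReal.ofReal_le_ofReal (Real.exp_le_exp.2 ?_)
      have : ∑ i, (a • x + b • y) i ^ 2 ≤ a * ∑ i, x i ^ 2 + b * ∑ i, y i ^ 2 := by
        rw [Finset.mul_sum, Finset.mul_sum, ← Finset.sum_add_distrib]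
        refine Finset.sum_le_sum fun i _ => ?_
        obtain rfl : b = 1 - a := by linarith
        simp only [Pi.add_apply, Pi.smul_apply, smul_eq_mul]
        nlinarith [mul_nonneg (mul_nonneg ha.le hb.le) (sq_nonneg (x i - y i))]
      linarith
    · simp [Set.indicator_of_notMem (s := Prod.mk (-t) ⁻¹' K) (by exact hy), hb]
  · simp [Set.indicator_of_notMem (s := Prod.mk t ⁻¹' K) (by exact hx), ha]

lemma integral_sq_sub_one_mul_exp (R : ℝ) :
    ∫ t in -R..R, (t ^ 2 - 1) * Real.exp (-t ^ 2 / 2) = -2 * R * Real.exp (-R ^ 2 / 2) := by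
  have hderiv (t : ℝ) : HasDerivAt (fun t => -t * Real.exp (-t ^ 2 / 2))
      ((t ^ 2 - 1) * Real.exp (-t ^ 2 / 2)) t := by
    have h₁ : HasDerivAt (fun t : ℝ => -t ^ 2 / 2) (-t) t :=
      ((hasDerivAt_pow 2 t).neg.div_const 2).congr_deriv (by simp; ring)
    exact ((hasDerivAt_neg t).mul h₁.exp).congr_deriv (by ring)
  rw [intervalIntegral.integral_eq_sub_of_hasDerivAt (fun t _ => hderiv t)
    (by apply Continuous.intervalIntegrable; fun_prop)]
  simp only [even_two.neg_pow, neg_neg]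
  ring

lemma integral_sq_sub_one_mul_exp_mul_neg {g : ℝ → ℝ} (hg₀ : ∀ t, 0 ≤ g t)
    (hg : ∀ s t, |s| ≤ |t| → g t ≤ g s) {R : ℝ} (hR : ∀ t, R < |t| → g t = 0)
    (hpos : ∀ᶠ t in nhds 0, 0 < g t)
    (h_int : Integrable fun t => (t ^ 2 - 1) * Real.exp (-t ^ 2 / 2) * g t) :
    ∫ t, (t ^ 2 - 1) * Real.exp (-t ^ 2 / 2) * g t < 0 := by
  wlog hR₀ : 0 < R generalizing R
  · exact this (R := 1) (fun t ht => hR t (by linarith)) one_pos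
  have hle (t : ℝ) : (t ^ 2 - 1) * Real.exp (-t ^ 2 / 2) * g t ≤
      (t ^ 2 - 1) * Real.exp (-t ^ 2 / 2) * g 1 := by
    obtain ht | ht := le_total |t| 1
    · refine mul_le_mul_of_nonpos_left (hg _ _ (by simpa using ht)) ?_
      exact mul_nonpos_of_nonpos_of_nonneg (by linarith [(sq_le_one_iff_abs_le_one t).2 ht])
        (Real.exp_pos _).le
    · refine mul_le_mul_of_nonneg_left (hg _ _ (by simpa using ht)) ?_
      exact mul_nonneg (by linarith [(one_le_sq_iff_one_le_abs t).2 ht]) (Real.exp_pos _).le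
  obtain h₁ | h₁ := (hg₀ 1).eq_or_lt'
  · rw [← neg_pos, ← integral_neg, integral_pos_iff_support_of_nonneg
      (fun t => by simpa [h₁] using hle t) (by exact h_int.neg)]
    have hev : ∀ᶠ t in nhds (0 : ℝ), t ∈ Function.support
        fun t => -((t ^ 2 - 1) * Real.exp (-t ^ 2 / 2) * g t) := by
      filter_upwards [hpos, Ioo_mem_nhds neg_one_lt_zero one_pos] with t ht ht'
      have : t ^ 2 < 1 := (sq_lt_one_iff_abs_lt_one t).2 (abs_lt.2 ht')
      simp [ht.ne', (sub_neg.2 this).ne]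
    exact Measure.measure_pos_of_mem_nhds _ hev
  · calc ∫ t, (t ^ 2 - 1) * Real.exp (-t ^ 2 / 2) * g t
        = ∫ t in Set.Icc (-R) R, (t ^ 2 - 1) * Real.exp (-t ^ 2 / 2) * g t := by
          refine (setIntegral_eq_integral_of_forall_compl_eq_zero fun t ht => ?_).symm
          rw [hR t (by rwa [Set.mem_Icc, ← abs_le, not_le] at ht), mul_zero]
      _ ≤ ∫ t in Set.Icc (-R) R, (t ^ 2 - 1) * Real.exp (-t ^ 2 / 2) * g 1 := by
          refine setIntegral_mono h_int.integrableOn ?_ hle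
          exact Continuous.integrableOn_Icc (by fun_prop)
      _ = -2 * R * Real.exp (-R ^ 2 / 2) * g 1 := by
          rw [integral_mul_const, integral_Icc_eq_integral_Ioc,
            ← intervalIntegral.integral_of_le (by linarith), integral_sq_sub_one_mul_exp]
      _ < 0 := by
          have := mul_pos (mul_pos hR₀ (Real.exp_pos (-R ^ 2 / 2))) h₁
          linarith

lemma setIntegral_prod_sq_sub_one_neg {n : ℕ} {K : Set (ℝ × (Fin n → ℝ))} (hK : Convex ℝ K)
    (hKc : IsCompact K) (hneg : ∀ p ∈ K, -p ∈ K) (hK₀ : 0 ∈ interior K) :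
    ∫ p in K, (p.1 ^ 2 - 1) * Real.exp (-p.1 ^ 2 / 2) * Real.exp (-(∑ i, p.2 i ^ 2) / 2) < 0 := by
  let ψ : (Fin n → ℝ) → ℝ := fun y => Real.exp (-(∑ i, y i ^ 2) / 2)
  let g : ℝ → ℝ := fun t => ∫ y in Prod.mk t ⁻¹' K, ψ y
  have hψ : Continuous ψ := by fun_prop
  have hKm := hKc.measurableSet
  have hm (u : ℝ) : MeasurableSet (Prod.mk u ⁻¹' K : Set (Fin n → ℝ)) :=
    measurable_prodMk_left hKm
  have hcomp (t : ℝ) : IsCompact (Prod.mk t ⁻¹' K : Set (Fin n → ℝ)) := by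
    refine (hKc.image continuous_snd).of_isClosed_subset
      (hKc.isClosed.preimage (by fun_prop)) fun y hy => ⟨(t, y), hy, rfl⟩
  have hψi (t : ℝ) : IntegrableOn ψ (Prod.mk t ⁻¹' K) :=
    hψ.continuousOn.integrableOn_compact (hcomp t)
  have hgl (t : ℝ) : ENNReal.ofReal (g t) = ∫⁻ y in Prod.mk t ⁻¹' K, ENNReal.ofReal (ψ y) :=
    ofReal_integral_eq_lintegral_ofReal (hψi t) (.of_forall fun _ => (Real.exp_pos _).le)
  have hg₀ (t : ℝ) : 0 ≤ g t := integral_nonneg fun _ => (Real.exp_pos _).le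
  have h_int : Integrable (K.indicator fun p =>
      (p.1 ^ 2 - 1) * Real.exp (-p.1 ^ 2 / 2) * ψ p.2) (volume.prod volume) := by
    rw [integrable_indicator_iff hKm]
    exact ContinuousOn.integrableOn_compact hKc (by fun_prop)
  have hinner (t : ℝ) : ∫ y, K.indicator (fun p : ℝ × (Fin n → ℝ) =>
      (p.1 ^ 2 - 1) * Real.exp (-p.1 ^ 2 / 2) * ψ p.2) (t, y) =
      (t ^ 2 - 1) * Real.exp (-t ^ 2 / 2) * g t := by
    rw [← integral_const_mul, ← integral_indicator (hm t)]
    rfl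
  rw [← integral_indicator hKm, Measure.volume_eq_prod, integral_prod _ h_int]
  simp only [hinner]
  obtain ⟨R, hR⟩ := hKc.isBounded.exists_norm_le
  refine integral_sq_sub_one_mul_exp_mul_neg hg₀ (fun s t hst => ?_) (R := R) (fun t ht => ?_) ?_ ?_
  · rw [← ENNReal.ofReal_le_ofReal_iff (hg₀ s), hgl, hgl]
    exact setLIntegral_slice_le hK hKm hneg hst
  · have : (Prod.mk t ⁻¹' K : Set (Fin n → ℝ)) = ∅ :=
      Set.eq_empty_of_forall_notMem fun y hy =>
        ((norm_fst_le (t, y)).trans (hR _ hy)).not_gt ht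
    simp [g, this]
  · have : ∀ᶠ t : ℝ in nhds 0, (t, (0 : Fin n → ℝ)) ∈ interior K :=
      (Continuous.prodMk_left (0 : Fin n → ℝ)).continuousAt.eventually
        (isOpen_interior.mem_nhds hK₀)
    filter_upwards [this] with t ht
    refine (setIntegral_pos_iff_support_of_nonneg_ae (.of_forall fun _ => (Real.exp_pos _).le)
      (hψi t)).2 ?_
    have hsupp : Function.support ψ = Set.univ := by
      ext y
      simp [ψ, Real.exp_ne_zero]
    rw [hsupp, Set.univ_inter]
    exact Measure.measure_pos_of_mem_nhds _
      ((Continuous.prodMk_right t).continuousAt.preimage_mem_nhds (mem_interior_iff_mem_nhds.1 ht))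
  · simpa only [hinner] using h_int.integral_prod_left

/-- Over a symmetric convex body, the Gaussian second moment in every direction `v` is less than
`‖v‖ ^ 2` times the Gaussian measure. -/
lemma setIntegral_inner_sq_sub_norm_sq_neg {n : ℕ} {K : Set (EuclideanSpace ℝ (Fin (n + 1)))}
    (hK : Convex ℝ K) (hKc : IsCompact K) (hneg : ∀ x ∈ K, -x ∈ K) (hK₀ : 0 ∈ interior K)
    {v : EuclideanSpace ℝ (Fin (n + 1))} (hv : v ≠ 0) :
    ∫ x in K, (inner ℝ v x ^ 2 - ‖v‖ ^ 2) * Real.exp (-‖x‖ ^ 2 / 2) < 0 := by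
  have hv' : ‖v‖ ≠ 0 := norm_ne_zero_iff.2 hv
  obtain ⟨b, hb⟩ : ∃ b : OrthonormalBasis (Fin (n + 1)) ℝ (EuclideanSpace ℝ (Fin (n + 1))),
      b 0 = ‖v‖⁻¹ • v := by
    have : Orthonormal ℝ (({0} : Set (Fin (n + 1))).domRestrict fun _ => ‖v‖⁻¹ • v) := by
      refine ⟨fun i => by simp [norm_smul, hv'], fun i j hij => (hij (Subsingleton.elim i j)).elim⟩
    obtain ⟨b, hb⟩ := this.exists_orthonormalBasis_extension_of_card_eq (by simp)
    exact ⟨b, hb 0 rfl⟩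
  let Ψ : (ℝ × (Fin n → ℝ)) ≃L[ℝ] EuclideanSpace ℝ (Fin (n + 1)) :=
    (Fin.consEquivL ℝ fun _ : Fin (n + 1) => ℝ).trans
      ((EuclideanSpace.equiv (Fin (n + 1)) ℝ).symm.trans b.repr.symm.toContinuousLinearEquiv)
  have hΨ : MeasurePreserving Ψ volume volume :=
    (b.measurePreserving_repr_symm.comp (PiLp.volume_preserving_toLp (Fin (n + 1)))).comp
      (measurePreserving_consEquivL n)
  have hrepr (p) : b.repr (Ψ p) = WithLp.toLp 2 (Fin.cons p.1 p.2 : Fin (n + 1) → ℝ) :=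
    b.repr.apply_symm_apply _
  have hnorm (p) : ‖Ψ p‖ ^ 2 = p.1 ^ 2 + ∑ i, p.2 i ^ 2 := by
    rw [← b.repr.norm_map, hrepr, EuclideanSpace.norm_sq_eq, Fin.sum_univ_succ]
    simp
  have hinner (p) : inner ℝ v (Ψ p) = ‖v‖ * p.1 := by
    have : inner ℝ (b 0) (Ψ p) = p.1 := by
      rw [← b.repr_apply_apply, hrepr]
      rfl
    rw [← this, hb, real_inner_smul_left, mul_inv_cancel_left₀ hv']
  rw [← hΨ.setIntegral_preimage_emb Ψ.toHomeomorph.measurableEmbedding]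
  have hcongr (p : ℝ × (Fin n → ℝ)) :
      (inner ℝ v (Ψ p) ^ 2 - ‖v‖ ^ 2) * Real.exp (-‖Ψ p‖ ^ 2 / 2) =
      ‖v‖ ^ 2 * ((p.1 ^ 2 - 1) * Real.exp (-p.1 ^ 2 / 2) *
        Real.exp (-(∑ i, p.2 i ^ 2) / 2)) := by
    rw [hinner, hnorm, mul_assoc (p.1 ^ 2 - 1), ← Real.exp_add]
    ring_nf
  simp only [hcongr]
  rw [integral_const_mul]
  refine mul_neg_of_pos_of_neg (by positivity) (setIntegral_prod_sq_sub_one_neg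
    (hK.linear_preimage (Ψ : (ℝ × (Fin n → ℝ)) →ₗ[ℝ] EuclideanSpace ℝ (Fin (n + 1))))
    (Ψ.toHomeomorph.isCompact_preimage.2 hKc) (fun p hp => ?_) ?_)
  · simpa using hneg _ hp
  · exact preimage_interior_subset_interior_preimage Ψ.continuous (by simpa using hK₀)

/-- The matrix `L_{i,m} = ∫_F (x_i x_m - δ_{i,m}) exp(-‖x‖²/2) dx` associated with a
symmetric convex set `F` with compact closure and nonempty interior is negative
definite. -/
theorem matrix_L_negdef (k : ℕ)
    (F : Set (EuclideanSpace ℝ (Fin k)))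
    (hFconv : Convex ℝ F) (hFsymm : F = -F)
    (hFcomp : IsCompact (closure F)) (hFint : (interior F).Nonempty)
    (α : Fin k → ℝ) (hα : α ≠ 0) :
    ∑ i, ∑ j,
      (∫ x in F, (x i * x j - if i = j then (1:ℝ) else 0) * Real.exp (-‖x‖ ^ 2 / 2)) *
        α i * α j < 0 := by
  obtain _ | n := k
  · exact (hα (Subsingleton.elim _ _)).elim
  have h_int (i j : Fin (n + 1)) : IntegrableOn (fun x : EuclideanSpace ℝ (Fin (n + 1)) =>
      (x i * x j - if i = j then (1:ℝ) else 0) * Real.exp (-‖x‖ ^ 2 / 2)) F :=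
    (ContinuousOn.integrableOn_compact hFcomp (by fun_prop)).mono_set subset_closure
  have hneg : ∀ x ∈ F, -x ∈ F := fun x hx => by
    rw [hFsymm] at hx
    exact hx
  have hF₀ : 0 ∈ interior F := by
    obtain ⟨x, hx⟩ := hFint
    have hx' : -x ∈ interior F := by
      have : (Neg.neg ⁻¹' interior F : Set (EuclideanSpace ℝ (Fin (n + 1)))) ⊆ interior F :=
        interior_maximal (fun y hy => by simpa using hneg _ (interior_subset hy))
          (isOpen_interior.preimage continuous_neg)
      exact this (by simpa using hx)
    simpa using hFconv.interior hx hx' (a := 1 / 2) (b := 1 / 2) (by norm_num) (by norm_num)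
      (by norm_num)
  have hsum : ∑ i, ∑ j,
      (∫ x in F, (x i * x j - if i = j then (1:ℝ) else 0) * Real.exp (-‖x‖ ^ 2 / 2)) *
        α i * α j = ∫ x in F, (inner ℝ (WithLp.toLp 2 α) x ^ 2 - ‖WithLp.toLp 2 α‖ ^ 2) *
          Real.exp (-‖x‖ ^ 2 / 2) := by
    simp_rw [mul_assoc _ (α _) (α _), ← integral_mul_const]
    rw [Finset.sum_congr rfl fun i _ => (integral_finsetSum _ fun j _ =>
      (h_int i j).mul_const (α i * α j)).symm, ← integral_finsetSum _ fun i _ =>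
      integrable_finsetSum _ fun j _ => (h_int i j).mul_const (α i * α j)]
    refine integral_congr_ae (.of_forall fun x => ?_)
    have h₁ : inner ℝ (WithLp.toLp 2 α) x = ∑ i, x i * α i := by
      simp [PiLp.inner_apply]
    have h₂ : ‖WithLp.toLp 2 α‖ ^ 2 = ∑ i, ∑ j, (if i = j then (1:ℝ) else 0) * (α i * α j) := by
      simp [EuclideanSpace.norm_sq_eq, ← sq]
    simp only [h₁, h₂]
    rw [sq (∑ i, x i * α i), Finset.sum_mul_sum, ← Finset.sum_sub_distrib, Finset.sum_mul]
    refine Finset.sum_congr rfl fun i _ => ?_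
    rw [← Finset.sum_sub_distrib, Finset.sum_mul]
    exact Finset.sum_congr rfl fun j _ => by ring
  rw [hsum, ← setIntegral_congr_set
    (closure_ae_eq_of_null_frontier (hFconv.addHaar_frontier volume))]
  refine setIntegral_inner_sq_sub_norm_sq_neg hFconv.closure hFcomp (fun x hx => ?_)
    (interior_mono subset_closure hF₀) (by simpa using hα)
  exact map_mem_closure continuous_neg hx hneg
end
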